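/- Let l ≥ 1, F = GF(2^{2l}), t = 2^l, and L₇ = {α ∈ F : α^{t+1} ≠ 1}. Let β ∈ F with β^{t+1} = 1. Then multiplication by β preserves the binary Goppa code Γ(L₇, X^{t+1} + 1): a finite subset S ⊆ L₇ is a codeword of Γ(L₇, X^{t+1}+1) if and only if {β·α : α ∈ S} (which is again contained in L₇) is a codeword of Γ(L₇, X^{t+1}+1). (Invariance claim from Table 2 of the paper: the Goppa polynomial x^{t+1}+1 is invariant under x ↦ βx for β = (α^{2^l−1})^i, making the code quasi-cyclic of index 2^l+1.) -/

import Mathlib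

open Finset
open scoped Classical

section Goppa

open Polynomial

variable {K : Type*} [Field K]

/-- The `j`-th syndrome, with respect to the Goppa polynomial `G`, of the binary vector with
support `S`. The locations in `S` are meant to be non-roots of `G`, since a root would
contribute the junk value `α ^ j * 0⁻¹ = 0`. -/
noncomputable def goppaSyndrome (G : K[X]) (S : Finset K) (j : ℕ) : K :=
  ∑ α ∈ S, α ^ j * (G.eval α)⁻¹

/-- The parity checks of the binary Goppa code with Goppa polynomial `G`, for the binary vector
with support `S`. That `S` avoids the roots of `G` is not part of the definition. -/
def IsGoppaCodeword (G : K[X]) (S : Finset K) : Prop :=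
  ∀ j < G.natDegree, goppaSyndrome G S j = 0

theorem isGoppaCodeword_X_pow_add_one_iff {n : ℕ} {S : Finset K} :
    IsGoppaCodeword (X ^ n + 1) S ↔ ∀ j < n, ∑ α ∈ S, α ^ j * (α ^ n + 1)⁻¹ = 0 := by
  have hdeg : (X ^ n + 1 : K[X]).natDegree = n := natDegree_X_pow_add_C (r := 1)
  simp only [IsGoppaCodeword, goppaSyndrome, hdeg, eval_add, eval_pow, eval_X, eval_one]

theorem eval_X_pow_add_one_mul {n : ℕ} {β : K} (hβ : β ^ n = 1) (x : K) :
    (X ^ n + 1 : K[X]).eval (β * x) = (X ^ n + 1 : K[X]).eval x := by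
  simp [mul_pow, hβ]

theorem eval_X_pow_add_one_ne_zero_iff [CharP K 2] {n : ℕ} {x : K} :
    (X ^ n + 1 : K[X]).eval x ≠ 0 ↔ x ^ n ≠ 1 := by
  simp [CharTwo.add_eq_zero]

variable [DecidableEq K] {G : K[X]} {β c : K}

theorem goppaSyndrome_image_mul (hβ : β ≠ 0) (hG : ∀ x, G.eval (β * x) = c * G.eval x)
    (S : Finset K) (j : ℕ) :
    goppaSyndrome G (S.image (β * ·)) j = β ^ j * c⁻¹ * goppaSyndrome G S j := by
  simp only [goppaSyndrome]
  rw [sum_image (mul_right_injective₀ hβ).injOn, mul_sum]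
  refine sum_congr rfl fun α _ ↦ ?_
  rw [hG, mul_pow, mul_inv, mul_mul_mul_comm]

theorem isGoppaCodeword_image_mul_iff (hβ : β ≠ 0) (hc : c ≠ 0)
    (hG : ∀ x, G.eval (β * x) = c * G.eval x) {S : Finset K} :
    IsGoppaCodeword G (S.image (β * ·)) ↔ IsGoppaCodeword G S := by
  simp [IsGoppaCodeword, goppaSyndrome_image_mul hβ hG, hβ, hc]

theorem stmt_19_general (hβ : β ≠ 0) (hc : c ≠ 0) (hG : ∀ x, G.eval (β * x) = c * G.eval x)
    {S : Finset K} (hS : ∀ α ∈ S, G.eval α ≠ 0) :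
    (∀ γ ∈ S.image (β * ·), G.eval γ ≠ 0) ∧
      (IsGoppaCodeword G S ↔ IsGoppaCodeword G (S.image (β * ·))) := by
  refine ⟨forall_mem_image.2 fun α hα ↦ ?_, (isGoppaCodeword_image_mul_iff hβ hc hG).symm⟩
  rw [hG]
  exact mul_ne_zero hc (hS α hα)

end Goppa

/-- Quasi-cyclicity claim from Table 2 of the paper: over `F = GF(2^(2l))`, `t = 2^l`,
`L₇ = {α : α^(t+1) ≠ 1}`, if `β^(t+1) = 1` then multiplication by `β` preserves the
binary Goppa code `Γ(L₇, X^(t+1) + 1)`: `S ⊆ L₇` is a codeword iff `{β α : α ∈ S}`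
(again contained in `L₇`) is a codeword. -/
theorem stmt_19 (l : ℕ) (hl : 1 ≤ l) (t : ℕ) (ht : t = 2 ^ l)
    (β : GaloisField 2 (2 * l)) (hβ : β ^ (t + 1) = 1)
    (S : Finset (GaloisField 2 (2 * l)))
    (hS : ∀ α ∈ S, α ^ (t + 1) ≠ 1) :
    (∀ γ ∈ S.image (β * ·), γ ^ (t + 1) ≠ 1) ∧
      ((∀ j < t + 1, ∑ α ∈ S, α ^ j * (α ^ (t + 1) + 1)⁻¹ = 0) ↔
        (∀ j < t + 1, ∑ γ ∈ S.image (β * ·), γ ^ j * (γ ^ (t + 1) + 1)⁻¹ = 0)) := by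
  simp only [← eval_X_pow_add_one_ne_zero_iff, ← isGoppaCodeword_X_pow_add_one_iff] at hS ⊢
  exact stmt_19_general (IsUnit.of_pow_eq_one hβ t.succ_ne_zero).ne_zero one_ne_zero
    (fun x ↦ (eval_X_pow_add_one_mul hβ x).trans (one_mul _).symm) hS
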